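/- arXiv:2208.07610 — 3 statements merged into one kernel-verified Lean document; each statement's English description precedes it below -/
import Mathlib

section
/- Suppose the invariant models {P_g}_{g∈G} and {Q_g}_{g∈G} have densities with respect to a common σ-finite left-invariant measure ν on X. Then for all g, h ∈ G and every Borel probability measure Π on G, defining the translated prior Π̃ by Π̃(B) := Π(gh⁻¹B) for Borel B ⊆ G, one has KL(Q_g, Π-mixture of {P_{g'}}) = KL(Q_h, Π̃-mixture of {P_{g'}}). -/
open MeasureTheory ENNReal

open Classical in
/-- Kullback–Leibler divergence, valued in the extended reals. -/
noncomputable def KLdiv {α : Type*} [MeasurableSpace α] (μ ν : Measure α) : EReal :=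
  if μ ≪ ν ∧ Integrable (fun x => Real.log (μ.rnDeriv ν x).toReal) μ
  then ((∫ x, Real.log (μ.rnDeriv ν x).toReal ∂μ : ℝ) : EReal)
  else ⊤

theorem KLdiv_map_equiv {α β : Type*} [MeasurableSpace α] [MeasurableSpace β]
    (e : α ≃ᵐ β) (μ ν : Measure α) [SigmaFinite μ] [SigmaFinite ν] :
    KLdiv (μ.map e) (ν.map e) = KLdiv μ ν := by
  have hac : μ.map e ≪ ν.map e ↔ μ ≪ ν := by
    constructor
    · intro hh
      have := hh.map e.symm.measurable
      simpa [Measure.map_map e.symm.measurable e.measurable] using this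
    · intro hh
      exact hh.map e.measurable
  by_cases h : μ ≪ ν
  · have hae : (fun x => Real.log ((μ.map e).rnDeriv (ν.map e) (e x)).toReal)
        =ᵐ[μ] fun x => Real.log (μ.rnDeriv ν x).toReal := by
      filter_upwards [h.ae_le (e.measurableEmbedding.rnDeriv_map μ ν)] with x hx
      rw [hx]
    have hint : Integrable (fun x => Real.log ((μ.map e).rnDeriv (ν.map e) x).toReal) (μ.map e)
        ↔ Integrable (fun x => Real.log (μ.rnDeriv ν x).toReal) μ := by
      rw [e.measurableEmbedding.integrable_map_iff]
      exact integrable_congr hae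
    have hI : ∫ x, Real.log ((μ.map e).rnDeriv (ν.map e) x).toReal ∂(μ.map e)
        = ∫ x, Real.log (μ.rnDeriv ν x).toReal ∂μ := by
      rw [e.measurableEmbedding.integral_map]
      exact integral_congr_ae hae
    unfold KLdiv
    rw [hac, hint, hI]
  · unfold KLdiv
    rw [if_neg (fun hh => h (hac.1 hh.1)), if_neg (fun hh => h hh.1)]

/-- **Translation invariance of the KL divergence to mixtures (key step in Proposition 5).**
If the invariant models `{P_g}` and `{Q_g}` are dominated by a common σ-finite
left-invariant measure `ν` on `X`, then for all `g, h ∈ G` and any prior `pri` on `G`,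
with the translated prior `prit (B) = pri (g h⁻¹ B)`, one has
`KL(Q_g, pri-mixture of {P_{g'}}) = KL(Q_h, prit-mixture of {P_{g'}})`. -/
theorem klDiv_mixture_translate
    {G : Type*} [Group G] [MeasurableSpace G]
    {X : Type*} [MeasurableSpace X] [MulAction G X]
    (hmeas : ∀ g : G, Measurable fun x : X => g • x)
    (ν : Measure X) [SigmaFinite ν]
    (hν : ∀ (g : G) (B : Set X), MeasurableSet B → ν ((g • ·) '' B) = ν B)
    (P Q : Measure X) [IsProbabilityMeasure P] [IsProbabilityMeasure Q]
    (p q : X → ℝ≥0∞) (hp : Measurable p) (hq : Measurable q)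
    (hP : P = ν.withDensity p) (hQ : Q = ν.withDensity q)
    -- measurability of the null model as a kernel (mixtures are well defined)
    (hPker : Measurable fun g : G => P.map (g • ·))
    (g h : G)
    (pri prit : Measure G) [IsProbabilityMeasure pri] [IsProbabilityMeasure prit]
    -- `prit` is the left translate of `pri` by `g h⁻¹`
    (hprit : ∀ B : Set G, MeasurableSet B → prit B = pri ((fun b => g * h⁻¹ * b) '' B)) :
    KLdiv (Q.map (g • ·)) (pri.bind fun g' => P.map (g' • ·))
      = KLdiv (Q.map (h • ·)) (prit.bind fun g' => P.map (g' • ·)) := by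
  let e : X ≃ᵐ X :=
    { toEquiv := MulAction.toPerm (g * h⁻¹)
      measurable_toFun := hmeas _
      measurable_invFun := hmeas _ }
  have he : (e : X → X) = fun x => (g * h⁻¹) • x := rfl
  have h1 : Q.map (g • ·) = (Q.map (h • ·)).map e := by
    rw [Measure.map_map e.measurable (hmeas h)]
    congr 1
    funext x
    simp [he, smul_smul]
  have key : ∀ A : Set X, MeasurableSet A → ∀ b : G,
      P.map (b • ·) (e ⁻¹' A) = P.map ((g * h⁻¹ * b) • ·) A := by
    intro A hA b
    rw [Measure.map_apply (hmeas b) (e.measurable hA), Measure.map_apply (hmeas _) hA]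
    congr 1
    ext x
    simp [he, smul_smul]
  have h2 : (pri.bind fun g' => P.map (g' • ·))
      = (prit.bind fun g' => P.map (g' • ·)).map e := by
    ext A hA
    have hf : Measurable fun b : G => P.map (b • ·) A :=
      (Measure.measurable_coe hA).comp hPker
    have hf' : Measurable fun b : G => P.map (b • ·) (e ⁻¹' A) :=
      (Measure.measurable_coe (e.measurable hA)).comp hPker
    rw [Measure.map_apply e.measurable hA, Measure.bind_apply hA hPker.aemeasurable,
      Measure.bind_apply (e.measurable hA) hPker.aemeasurable]
    have hm : pri.map (fun b : G => P.map (b • ·) A)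
        = prit.map (fun b : G => P.map (b • ·) (e ⁻¹' A)) := by
      ext S hS
      rw [Measure.map_apply hf hS, Measure.map_apply hf' hS, hprit _ (hf' hS)]
      congr 1
      ext b
      simp only [Set.mem_preimage, Set.mem_image]
      constructor
      · intro hb
        refine ⟨(g * h⁻¹)⁻¹ * b, ?_, mul_inv_cancel_left _ _⟩
        rw [key A hA, mul_inv_cancel_left]
        exact hb
      · rintro ⟨b', hb', rfl⟩
        rw [key A hA] at hb'
        exact hb'
    have a1 := lintegral_map (μ := pri) (f := fun y : ℝ≥0∞ => y) measurable_id hf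
    have a2 := lintegral_map (μ := prit) (f := fun y : ℝ≥0∞ => y) measurable_id hf'
    rw [← a1, ← a2, hm]
  have hfin : IsFiniteMeasure (prit.bind fun g' => P.map (g' • ·)) := by
    constructor
    rw [Measure.bind_apply MeasurableSet.univ hPker.aemeasurable]
    have : ∀ b : G, P.map (b • ·) Set.univ = 1 := by
      intro b
      rw [Measure.map_apply (hmeas b) MeasurableSet.univ]
      simp
    simp [this]
  have hfinQ : IsProbabilityMeasure (Q.map (h • ·)) :=
    Measure.isProbabilityMeasure_map (hmeas h).aemeasurable
  rw [h1, h2]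
  exact KLdiv_map_equiv e _ _
end

section
/- Let (P_δ)_{δ∈Δ} be a family of probability measures on a measurable space M, each with density p_δ with respect to a common σ-finite measure μ, and let f : M → S be a measurable map that is a sufficient transformation in the Fisher–Neyman sense: there exist measurable functions g_δ : S → [0,∞) (for each δ) and h : M → [0,∞) such that p_δ(x) = g_δ(f(x))·h(x) for μ-almost every x. Then for any δ₀, δ₁ ∈ Δ, KL(P_{δ₁}, P_{δ₀}) = KL(f_*P_{δ₁}, f_*P_{δ₀}), i.e., the Kullback–Leibler divergence is unchanged by reducing the data through f. -/
open MeasureTheory ENNReal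

/-- **Invariance of the KL divergence under sufficient transformations (key step in
Proposition 7).** If `(P δ)` is a family of probability measures with densities `p δ` with
respect to a common σ-finite measure `μ`, and `f` is sufficient in the Fisher–Neyman sense
(`p δ x = gd δ (f x) * h x` for `μ`-a.e. `x`), then the KL divergence is unchanged by
reducing the data through `f`: `KL(P δ₁, P δ₀) = KL(f_* P δ₁, f_* P δ₀)`. -/
theorem klDiv_map_of_sufficient
    {M S Δ : Type*} [MeasurableSpace M] [MeasurableSpace S]
    (μ : Measure M) [SigmaFinite μ]
    (P : Δ → Measure M) [∀ δ, IsProbabilityMeasure (P δ)]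
    (p : Δ → M → ℝ≥0∞) (hp : ∀ δ, Measurable (p δ))
    (hPdens : ∀ δ, P δ = μ.withDensity (p δ))
    (f : M → S) (hf : Measurable f)
    -- the Fisher–Neyman factorization
    (gd : Δ → S → ℝ≥0∞) (h : M → ℝ≥0∞)
    (hgd : ∀ δ, Measurable (gd δ)) (hh : Measurable h)
    (hfac : ∀ δ, p δ =ᵐ[μ] fun x => gd δ (f x) * h x)
    (δ₀ δ₁ : Δ) :
    KLdiv (P δ₁) (P δ₀) = KLdiv ((P δ₁).map f) ((P δ₀).map f) := by
  have key : (P δ₁).map f ≪ (P δ₀).map f →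
      P δ₁ = (P δ₀).withDensity (fun x => gd δ₁ (f x) / gd δ₀ (f x)) := by
    intro hac
    have hr : Measurable (fun x => gd δ₁ (f x) / gd δ₀ (f x)) :=
      ((hgd δ₁).comp hf).div ((hgd δ₀).comp hf)
    have hA : MeasurableSet {s | gd δ₀ s = 0} := hgd δ₀ (measurableSet_singleton 0)
    have hfA : MeasurableSet (f ⁻¹' {s | gd δ₀ s = 0}) := hf hA
    have h0 : (P δ₀).map f {s | gd δ₀ s = 0} = 0 := by
      rw [Measure.map_apply hf hA, hPdens δ₀, withDensity_apply _ hfA,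
        lintegral_eq_zero_iff (hp δ₀)]
      rw [Filter.EventuallyEq, ae_restrict_iff' hfA]
      filter_upwards [hfac δ₀] with x hx hxA
      have : gd δ₀ (f x) = 0 := hxA
      simp [hx, this]
    have h1 := hac h0
    rw [Measure.map_apply hf hA, hPdens δ₁, withDensity_apply _ hfA,
        lintegral_eq_zero_iff (hp δ₁), Filter.EventuallyEq, ae_restrict_iff' hfA] at h1
    have hfin : ∀ᵐ x ∂μ, p δ₀ x < ∞ := by
      refine ae_lt_top (hp δ₀) ?_
      have : P δ₀ Set.univ = 1 := measure_univ
      rw [hPdens δ₀, withDensity_apply _ MeasurableSet.univ, Measure.restrict_univ] at this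
      simp [this]
    rw [hPdens δ₁, hPdens δ₀, ← withDensity_mul _ (hp δ₀) hr]
    refine withDensity_congr_ae ?_
    filter_upwards [hfac δ₀, hfac δ₁, h1, hfin] with x e0 e1 z fin
    simp only [Pi.mul_apply]
    by_cases c0 : gd δ₀ (f x) = 0
    · have hz : p δ₁ x = 0 := z c0
      rw [hz, e0, c0]; simp
    by_cases ct : gd δ₀ (f x) = ∞
    · have hx0 : h x = 0 := by
        by_contra hne
        rw [e0, ct, ENNReal.top_mul hne] at fin
        exact lt_irrefl _ fin
      rw [e0, e1, hx0]; simp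
    · rw [e0, e1, mul_right_comm, ENNReal.mul_div_cancel c0 ct]
  by_cases hac : (P δ₁).map f ≪ (P δ₀).map f
  · have hk := key hac
    have hr : Measurable (fun s => gd δ₁ s / gd δ₀ s) := (hgd δ₁).div (hgd δ₀)
    have hac' : P δ₁ ≪ P δ₀ := by
      rw [hk]; exact withDensity_absolutelyContinuous _ _
    have hmap : (P δ₁).map f = ((P δ₀).map f).withDensity (fun s => gd δ₁ s / gd δ₀ s) := by
      ext A hA
      rw [withDensity_apply _ hA, setLIntegral_map hA hr hf, Measure.map_apply hf hA]
      conv_lhs => rw [hk]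
      rw [withDensity_apply _ (hf hA)]
    have : IsProbabilityMeasure ((P δ₀).map f) := Measure.isProbabilityMeasure_map hf.aemeasurable
    have d1 : (P δ₁).rnDeriv (P δ₀) =ᵐ[P δ₁] fun x => gd δ₁ (f x) / gd δ₀ (f x) := by
      refine hac'.ae_le ?_
      have := Measure.rnDeriv_withDensity (P δ₀) (hr.comp hf)
      have e : (P δ₀).withDensity ((fun s => gd δ₁ s / gd δ₀ s) ∘ f) = P δ₁ := hk.symm
      rw [e] at this
      exact this
    have d2 : ((P δ₁).map f).rnDeriv ((P δ₀).map f) =ᵐ[(P δ₁).map f]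
        fun s => gd δ₁ s / gd δ₀ s := by
      refine hac.ae_le ?_
      have := Measure.rnDeriv_withDensity ((P δ₀).map f) hr
      rw [← hmap] at this
      exact this
    have l1 : (fun x => Real.log ((P δ₁).rnDeriv (P δ₀) x).toReal) =ᵐ[P δ₁]
        (fun x => Real.log (((P δ₁).map f).rnDeriv ((P δ₀).map f) (f x)).toReal) := by
      filter_upwards [d1, ae_of_ae_map hf.aemeasurable d2] with x a b
      rw [a, b]
    have hm : Measurable
        (fun s => Real.log (((P δ₁).map f).rnDeriv ((P δ₀).map f) s).toReal) :=
      Real.measurable_log.comp (Measure.measurable_rnDeriv _ _).ennreal_toReal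
    have hi : Integrable (fun x => Real.log ((P δ₁).rnDeriv (P δ₀) x).toReal) (P δ₁) ↔
        Integrable (fun s => Real.log (((P δ₁).map f).rnDeriv ((P δ₀).map f) s).toReal)
          ((P δ₁).map f) := by
      rw [integrable_map_measure hm.aestronglyMeasurable hf.aemeasurable]
      exact integrable_congr l1
    unfold KLdiv
    rw [integral_map hf.aemeasurable hm.aestronglyMeasurable, integral_congr_ae l1]
    by_cases hI : Integrable
        (fun s => Real.log (((P δ₁).map f).rnDeriv ((P δ₀).map f) s).toReal) ((P δ₁).map f)
    · rw [if_pos ⟨hac', hi.2 hI⟩, if_pos ⟨hac, hI⟩]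
    · rw [if_neg (fun H => hI (hi.1 H.2)), if_neg (fun H => hI H.2)]
  · have hac' : ¬ P δ₁ ≪ P δ₀ := fun H => hac (H.map hf)
    simp [KLdiv, hac, hac']
end

section
/- Let (P_δ)_{δ∈Δ} be a family of probability measures on a measurable space M, each with density p_δ with respect to a common σ-finite measure μ, and let f : M → S be measurable with the Fisher–Neyman factorization p_δ(x) = g_δ(f(x))·h(x) μ-a.e. for measurable g_δ, h ≥ 0. Then for δ₀, δ₁ ∈ Δ with P_{δ₁} ≪ P_{δ₀}, the likelihood ratios coincide: (dP_{δ₁}/dP_{δ₀})(x) = (d f_*P_{δ₁}/d f_*P_{δ₀})(f(x)) for P_{δ₀}-almost every x. In particular, the likelihood ratio of the maximal invariant of the data equals the likelihood ratio of a maximal invariant of a sufficient statistic. -/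
open MeasureTheory ENNReal

/-- **Corollary 8 (likelihood ratios coincide under a sufficient reduction).** If `(P δ)`
is a family of probability measures with densities `p δ` with respect to a common σ-finite
measure `μ`, and `f` satisfies the Fisher–Neyman factorization
`p δ x = gd δ (f x) * h x` for `μ`-a.e. `x`, then for `δ₀, δ₁` with `P δ₁ ≪ P δ₀`, the
likelihood ratios coincide: `(dP δ₁/dP δ₀)(x) = (d f_*P δ₁/d f_*P δ₀)(f x)` for
`P δ₀`-almost every `x`. -/
theorem rnDeriv_map_of_sufficient
    {M S Δ : Type*} [MeasurableSpace M] [MeasurableSpace S]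
    (μ : Measure M) [SigmaFinite μ]
    (P : Δ → Measure M) [∀ δ, IsProbabilityMeasure (P δ)]
    (p : Δ → M → ℝ≥0∞) (hp : ∀ δ, Measurable (p δ))
    (hPdens : ∀ δ, P δ = μ.withDensity (p δ))
    (f : M → S) (hf : Measurable f)
    (gd : Δ → S → ℝ≥0∞) (h : M → ℝ≥0∞)
    (hgd : ∀ δ, Measurable (gd δ)) (hh : Measurable h)
    (hfac : ∀ δ, p δ =ᵐ[μ] fun x => gd δ (f x) * h x)
    (δ₀ δ₁ : Δ) (hac : P δ₁ ≪ P δ₀) :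
    ∀ᵐ x ∂(P δ₀),
      (P δ₁).rnDeriv (P δ₀) x = ((P δ₁).map f).rnDeriv ((P δ₀).map f) (f x) := by
  have hA : ∀ᵐ x ∂(P δ₀), p δ₀ x ≠ 0 := by
    rw [hPdens δ₀, ae_withDensity_iff (hp δ₀)]
    exact Filter.Eventually.of_forall fun x hx => hx
  have hB : ∀ᵐ x ∂μ, p δ₁ x ≠ 0 → p δ₀ x ≠ 0 := by
    have this : ∀ᵐ x ∂(P δ₁), p δ₀ x ≠ 0 := hac.ae_le hA
    rwa [hPdens δ₁, ae_withDensity_iff (hp δ₁)] at this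
  have hfin : ∀ᵐ x ∂μ, p δ₀ x < ∞ := by
    refine ae_lt_top (hp δ₀) ?_
    have h1 : P δ₀ Set.univ = 1 := measure_univ
    rw [hPdens δ₀, withDensity_apply _ MeasurableSet.univ, Measure.restrict_univ] at h1
    rw [h1]
    exact one_ne_top
  let r : S → ℝ≥0∞ := fun s => gd δ₁ s / gd δ₀ s
  have hr : Measurable r := (hgd δ₁).div (hgd δ₀)
  have hrf : Measurable (fun x => r (f x)) := hr.comp hf
  have key : p δ₁ =ᵐ[μ] p δ₀ * (fun x => r (f x)) := by
    filter_upwards [hB, hfin, hfac δ₀, hfac δ₁] with x hb hx h0 h1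
    rw [Pi.mul_apply]
    by_cases hz : p δ₀ x = 0
    · rw [hz, zero_mul]
      by_contra hne
      exact hb hne hz
    · rw [h1, h0]
      rw [h0] at hz hx
      have hg0 : gd δ₀ (f x) ≠ 0 := left_ne_zero_of_mul hz
      have hh0 : h x ≠ 0 := right_ne_zero_of_mul hz
      have hgt : gd δ₀ (f x) ≠ ∞ := by
        intro ht
        rw [ht, ENNReal.top_mul hh0] at hx
        exact lt_irrefl _ hx
      calc gd δ₁ (f x) * h x = (gd δ₁ (f x) / gd δ₀ (f x) * gd δ₀ (f x)) * h x := by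
            rw [ENNReal.div_mul_cancel hg0 hgt]
        _ = _ := by simp only [r]; ring
  have hP : P δ₁ = (P δ₀).withDensity (fun x => r (f x)) := by
    rw [hPdens δ₁, hPdens δ₀, ← withDensity_mul _ (hp δ₀) hrf]
    exact withDensity_congr_ae key
  have hmap : (P δ₁).map f = ((P δ₀).map f).withDensity r := by
    ext s hs
    rw [Measure.map_apply hf hs, hP, withDensity_apply _ (hf hs), withDensity_apply _ hs,
      setLIntegral_map hs hr hf]
  have : IsProbabilityMeasure ((P δ₀).map f) := Measure.isProbabilityMeasure_map hf.aemeasurable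
  have e1 : (P δ₁).rnDeriv (P δ₀) =ᵐ[P δ₀] fun x => r (f x) := by
    rw [hP]
    exact Measure.rnDeriv_withDensity _ hrf
  have e2 : ((P δ₁).map f).rnDeriv ((P δ₀).map f) =ᵐ[(P δ₀).map f] r := by
    rw [hmap]
    exact Measure.rnDeriv_withDensity _ hr
  filter_upwards [e1, ae_of_ae_map hf.aemeasurable e2] with x h1 h2
  rw [h1, h2]
end
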